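/- Let q be a power of a prime p, let k, f be positive integers with f | k, f > 1 and gcd(k/f, q−1) = 1, let a ∈ F_q^*, and let D = {x ∈ F_{q^k} : Tr_{q^f/q}(x^{(q^k−1)/(q^f−1)}) + a = 0}. Let χ₁ be the canonical additive character of F_{q^f} and let φ be a multiplicative character of F_{q^f}^* of order (q^f−1)/(q−1). Then for every b ∈ F_{q^k}^*, the Hamming weight w(c_b) = #{d ∈ D : Tr_{q^k/q}(b d) ≠ 0} satisfies (as an equality of complex numbers) w(c_b) = (q−1)q^{f+k−2}/(q^f−1) + ((−1)^{k/f−1}(q−1)q^{f−2}/(q^f−1)) · Σ_{j=1}^{(q^f−1)/(q−1) − 1} φ^j(−1) G(φ^j, χ₁)^{k/f − 1} conj(φ^j)(b^{(q^k−1)/(q^f−1)}). -/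

import Mathlib

namespace HD
open Polynomial UniqueFactorizationMonoid

set_option linter.unusedSectionVars false
variable {F : Type} [Field F] [Fintype F]

lemma finite_monic (n : ℕ) : {f : F[X] | f.Monic ∧ f.natDegree ≤ n}.Finite := by
  have : Function.Injective (fun (f : {f : F[X] // f.natDegree ≤ n}) (i : Fin (n + 1)) => f.1.coeff i) := by
    rintro ⟨f, hf⟩ ⟨g, hg⟩ h
    ext i
    by_cases hi : i < n + 1
    · exact congrFun h ⟨i, hi⟩
    · simp only
      rw [coeff_eq_zero_of_natDegree_lt (by omega), coeff_eq_zero_of_natDegree_lt (by omega)]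
  have h2 : Finite {f : F[X] // f.natDegree ≤ n} := Finite.of_injective _ this
  have h3 : {f : F[X] | f.natDegree ≤ n}.Finite := h2
  exact h3.subset (fun f hf => hf.2)

/-- monic polynomials of degree `n` -/
noncomputable def M (F : Type) [Field F] [Fintype F] (n : ℕ) : Finset F[X] :=
  ((finite_monic (F := F) n).subset (t := {f : F[X] | f.Monic ∧ f.natDegree = n})
    (fun _ hf => ⟨hf.1, hf.2.le⟩)).toFinset

lemma mem_M {n : ℕ} {f : F[X]} : f ∈ M F n ↔ f.Monic ∧ f.natDegree = n := by simp [M]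

/-- monic irreducible polynomials of degree at most `B` -/
noncomputable def I (F : Type) [Field F] [Fintype F] (B : ℕ) : Finset F[X] :=
  ((finite_monic (F := F) B).subset (t := {f : F[X] | (f.Monic ∧ f.natDegree ≤ B) ∧ Irreducible f})
    (fun _ hf => hf.1)).toFinset

lemma mem_I {n : ℕ} {f : F[X]} : f ∈ I F n ↔ (f.Monic ∧ f.natDegree ≤ n) ∧ Irreducible f := by
  simp [I]

/-- the multiplicative function on monic polynomials -/
noncomputable def lam (χ : MulChar F ℂ) (ψ : AddChar F ℂ) (f : F[X]) : ℂ :=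
  χ ((-1) ^ f.natDegree * f.coeff 0) * ψ (-f.nextCoeff)

variable (χ : MulChar F ℂ) (ψ : AddChar F ℂ)

lemma lam_one : lam χ ψ 1 = 1 := by
  have : (1 : F[X]).nextCoeff = 0 := nextCoeff_C_eq_zero 1
  simp [lam, this]

lemma lam_mul {f g : F[X]} (hf : f.Monic) (hg : g.Monic) :
    lam χ ψ (f * g) = lam χ ψ f * lam χ ψ g := by
  unfold lam
  rw [hf.nextCoeff_mul hg, hf.natDegree_mul hg, mul_coeff_zero, neg_add, AddChar.map_add_eq_mul,
    pow_add, mul_mul_mul_comm, map_mul]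
  ring

lemma lam_pow {f : F[X]} (hf : f.Monic) (r : ℕ) : lam χ ψ (f ^ r) = lam χ ψ f ^ r := by
  induction r with
  | zero => simp [lam_one]
  | succ r ih => rw [pow_succ, lam_mul _ _ (hf.pow r) hf, ih, pow_succ]

/-- coefficients of the L-function -/
noncomputable def Lc (n : ℕ) : ℂ := ∑ f ∈ M F n, lam χ ψ f

lemma Lc_zero : Lc χ ψ 0 = 1 := by
  have : M F 0 = {1} := by
    ext f
    simp only [mem_M, Finset.mem_singleton]
    constructor
    · rintro ⟨h1, h2⟩; exact (h1.natDegree_eq_zero).1 h2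
    · rintro rfl; simp
  rw [Lc, this, Finset.sum_singleton, lam_one]

lemma Lc_one : Lc χ ψ 1 = gaussSum χ ψ := by
  rw [Lc, gaussSum]
  symm
  refine Finset.sum_bij' (fun c _ => X - C c) (fun f _ => -f.coeff 0) ?_ ?_ ?_ ?_ ?_
  · intro c _; simp [mem_M, monic_X_sub_C]
  · simp
  · simp
  · intro f hf
    rw [mem_M] at hf
    rw [C_neg, sub_neg_eq_add]
    conv_rhs => rw [eq_X_add_C_of_natDegree_le_one hf.2.le]
    have : f.coeff 1 = 1 := by rw [← hf.2]; exact hf.1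
    simp [this]
  · intro c _; simp [lam, nextCoeff_X_sub_C]

lemma Lc_two (hψ : ψ ≠ 1) {n : ℕ} (hn : 2 ≤ n) : Lc χ ψ n = 0 := by
  obtain ⟨t, ht⟩ : ∃ t, ψ t ≠ 1 := by
    by_contra! h
    exact hψ (by ext x; simp [h x])
  have key : ∀ (s : F), ∀ f ∈ M F n, f + C s * X ^ (n - 1) ∈ M F n := by
    intro s f hf
    rw [mem_M] at hf ⊢
    have hlt : (C s * X ^ (n - 1)).degree < f.degree := by
      rw [degree_eq_natDegree hf.1.ne_zero, hf.2]
      refine (degree_C_mul_X_pow_le _ _).trans_lt ?_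
      exact_mod_cast (by omega : n - 1 < n)
    exact ⟨hf.1.add_of_left hlt, by rw [natDegree_add_eq_left_of_degree_lt hlt, hf.2]⟩
  have h : Lc χ ψ n = ψ t * Lc χ ψ n := by
    conv_rhs => rw [Lc, Finset.mul_sum]
    rw [Lc]
    refine Finset.sum_bij' (fun f _ => f + C t * X ^ (n-1)) (fun f _ => f + C (-t) * X ^ (n-1))
      (key _) (key _) ?_ ?_ ?_
    · intro f _; simp
    · intro f _; simp
    · intro f hf
      have h2 := mem_M.1 (key t f hf)
      rw [mem_M] at hf
      unfold lam
      rw [nextCoeff_of_natDegree_pos (by omega), nextCoeff_of_natDegree_pos (by omega), h2.2, hf.2]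
      simp only [coeff_add, coeff_C_mul, coeff_X_pow, if_true]
      rw [if_neg (by omega)]
      simp only [mul_one, mul_zero, add_zero, neg_add]
      rw [AddChar.map_add_eq_mul]
      have : ψ t * ψ (-t) = 1 := by rw [← AddChar.map_add_eq_mul]; simp
      linear_combination (-(χ ((-1) ^ n * f.coeff 0) * ψ (-f.coeff (n - 1)))) * this
  have : (1 - ψ t) * Lc χ ψ n = 0 := by linear_combination h
  rcases mul_eq_zero.1 this with h | h
  · exact absurd (by linear_combination -h) ht
  · exact h

open Classical in
lemma degree_formula {n B : ℕ} (hnB : n ≤ B) {f : F[X]} (hf : f.Monic) (hn : f.natDegree = n) :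
    n = ∑ P ∈ I F B, ∑ r ∈ Finset.Icc 1 B, if P ^ r ∣ f then P.natDegree else 0 := by
  have hf0 := hf.ne_zero
  have hmon : ∀ P ∈ normalizedFactors f, P.Monic := fun P hP => by
    have h1 := normalize_normalized_factor P hP
    rw [← h1]
    exact monic_normalize (irreducible_of_normalized_factor P hP).ne_zero
  have h1 : f.natDegree = ((normalizedFactors f).map natDegree).sum := by
    rw [← natDegree_multiset_prod_of_monic _ hmon, prod_normalizedFactors_eq hf0,
      hf.normalize_eq_self]
  have hle : ∀ P, P ∣ f → P.natDegree ≤ B := fun P hP =>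
    (natDegree_le_of_dvd hP hf0).trans (by omega)
  conv_lhs => rw [← hn, h1, Finset.sum_multiset_map_count]
  have hsub : (normalizedFactors f).toFinset ⊆ I F B := by
    intro P hP
    rw [Multiset.mem_toFinset] at hP
    rw [mem_I]
    exact ⟨⟨hmon P hP, hle P (dvd_of_mem_normalizedFactors hP)⟩, irreducible_of_normalized_factor P hP⟩
  rw [Finset.sum_subset hsub]
  · refine Finset.sum_congr rfl fun P hP => ?_
    rw [mem_I] at hP
    rw [← Finset.sum_filter, Finset.sum_const]
    congr 1
    have hem := emultiplicity_eq_count_normalizedFactors hP.2 hf0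
    rw [hP.1.1.normalize_eq_self] at hem
    have hiff : ∀ r, P ^ r ∣ f ↔ r ≤ (normalizedFactors f).count P := by
      intro r
      rw [pow_dvd_iff_le_emultiplicity, hem]
      exact_mod_cast Iff.rfl
    have hc : (normalizedFactors f).count P ≤ B := by
      have h2 := natDegree_le_of_dvd ((hiff _).2 le_rfl) hf0
      rw [natDegree_pow] at h2
      have := hP.2.natDegree_pos
      nlinarith
    have : (Finset.Icc 1 B).filter (fun r => P ^ r ∣ f) = Finset.Icc 1 ((normalizedFactors f).count P) := by
      ext r
      simp only [Finset.mem_filter, Finset.mem_Icc, hiff]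
      omega
    rw [this]; simp
  · intro P _ hP
    rw [Multiset.mem_toFinset, ← Multiset.count_eq_zero] at hP
    simp [hP]

open Classical in
lemma sum_dvd {n : ℕ} {Q : F[X]} (hQ : Q.Monic) :
    ∑ f ∈ M F n, (if Q ∣ f then lam χ ψ f else 0) =
      if Q.natDegree ≤ n then lam χ ψ Q * Lc χ ψ (n - Q.natDegree) else 0 := by
  split_ifs with h
  · rw [← Finset.sum_filter, Lc, Finset.mul_sum]
    symm
    refine Finset.sum_bij (fun g _ => Q * g) ?_ ?_ ?_ ?_
    · intro g hg
      rw [mem_M] at hg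
      rw [Finset.mem_filter, mem_M]
      refine ⟨⟨hQ.mul hg.1, ?_⟩, dvd_mul_right _ _⟩
      rw [hQ.natDegree_mul hg.1]; omega
    · intro g _ g' _ h
      exact mul_left_cancel₀ hQ.ne_zero h
    · intro f hf
      rw [Finset.mem_filter, mem_M] at hf
      obtain ⟨⟨h1, h2⟩, g, rfl⟩ := hf
      have hg := hQ.of_mul_monic_left h1
      refine ⟨g, ?_, rfl⟩
      rw [mem_M]
      refine ⟨hg, ?_⟩
      rw [hQ.natDegree_mul hg] at h2; omega
    · intro g hg
      rw [lam_mul _ _ hQ (mem_M.1 hg).1]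
  · refine Finset.sum_eq_zero fun f hf => ?_
    rw [mem_M] at hf
    rw [if_neg]
    intro hd
    exact h ((natDegree_le_of_dvd hd hf.1.ne_zero).trans hf.2.le)

/-- power sums -/
noncomputable def cc (B n : ℕ) : ℂ := ∑ P ∈ I F B, ∑ r ∈ Finset.Icc 1 B,
  if P.natDegree * r = n then P.natDegree * lam χ ψ P ^ r else 0

lemma main_identity {n B : ℕ} (hnB : n ≤ B) :
    n * Lc χ ψ n = ∑ P ∈ I F B, ∑ r ∈ Finset.Icc 1 B,
      if P.natDegree * r ≤ n then P.natDegree * lam χ ψ P ^ r * Lc χ ψ (n - P.natDegree * r) else 0 := by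
  classical
  have h1 : (n : ℂ) * Lc χ ψ n = ∑ f ∈ M F n, ∑ P ∈ I F B, ∑ r ∈ Finset.Icc 1 B,
      (P.natDegree : ℂ) * (if P ^ r ∣ f then lam χ ψ f else 0) := by
    rw [Lc, Finset.mul_sum]
    refine Finset.sum_congr rfl fun f hf => ?_
    rw [mem_M] at hf
    conv_lhs => rw [degree_formula hnB hf.1 hf.2]
    push_cast
    rw [Finset.sum_mul]
    refine Finset.sum_congr rfl fun P _ => ?_
    rw [Finset.sum_mul]
    refine Finset.sum_congr rfl fun r _ => ?_
    split_ifs <;> simp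
  rw [h1, Finset.sum_comm]
  refine Finset.sum_congr rfl fun P hP => ?_
  rw [mem_I] at hP
  rw [Finset.sum_comm]
  refine Finset.sum_congr rfl fun r _ => ?_
  rw [← Finset.mul_sum, sum_dvd χ ψ (hP.1.1.pow r), natDegree_pow, lam_pow _ _ hP.1.1, mul_comm r]
  split_ifs <;> ring

lemma cc_one {B : ℕ} (hB : 1 ≤ B) : cc χ ψ B 1 = gaussSum χ ψ := by
  have h := main_identity χ ψ hB
  rw [Lc_one] at h
  rw [cc]
  simp only [Nat.cast_one, one_mul] at h
  rw [h]
  refine Finset.sum_congr rfl fun P hP => Finset.sum_congr rfl fun r hr => ?_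
  have : 0 < P.natDegree := (mem_I.1 hP).2.natDegree_pos
  have hr1 := (Finset.mem_Icc.1 hr).1
  have : 0 < P.natDegree * r := by positivity
  by_cases h1 : P.natDegree * r = 1
  · rw [if_pos h1, if_pos h1.le, h1, Nat.sub_self, Lc_zero, mul_one]
  · rw [if_neg h1, if_neg (by omega)]

lemma cc_succ (hψ : ψ ≠ 1) {n B : ℕ} (hn : 1 ≤ n) (hB : n + 1 ≤ B) :
    cc χ ψ B (n + 1) = - gaussSum χ ψ * cc χ ψ B n := by
  have h := main_identity χ ψ hB
  rw [Lc_two χ ψ hψ (by omega), mul_zero] at h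
  rw [eq_comm, ← sub_eq_zero, cc, cc, Finset.mul_sum, ← Finset.sum_sub_distrib, ← neg_eq_zero,
    ← Finset.sum_neg_distrib]
  refine Eq.trans ?_ h.symm
  refine Finset.sum_congr rfl fun P hP => ?_
  rw [Finset.mul_sum, ← Finset.sum_sub_distrib, ← Finset.sum_neg_distrib]
  refine Finset.sum_congr rfl fun r hr => ?_
  set s := P.natDegree * r
  rcases lt_trichotomy s n with h1 | h1 | h1
  · rw [if_neg (by omega), if_neg (by omega), if_pos (by omega), Lc_two χ ψ hψ (by omega)]; ring
  · rw [if_pos (by omega), if_neg (by omega), if_pos (by omega), show n + 1 - s = 1 by omega, Lc_one]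
    ring
  · by_cases h2 : s = n + 1
    · rw [if_neg (by omega), if_pos (by omega), if_pos (by omega), show n + 1 - s = 0 by omega, Lc_zero]
      ring
    · rw [if_neg (by omega), if_neg (by omega), if_neg (by omega)]; ring

lemma cc_eq (hψ : ψ ≠ 1) {B n : ℕ} (hB : n + 1 ≤ B) :
    cc χ ψ B (n + 1) = (-1) ^ n * gaussSum χ ψ ^ (n + 1) := by
  induction n with
  | zero => simp [cc_one χ ψ hB]
  | succ n ih => rw [cc_succ χ ψ hψ (by omega) hB, ih (by omega)]; ring

variable {K : Type} [Field K] [Fintype K] [Algebra F K]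

open IntermediateField in
lemma lam_minpoly (α : K) : χ (Algebra.norm F α) * ψ (Algebra.trace F K α) =
    lam χ ψ (minpoly F α) ^ (Module.finrank F⟮α⟯ K) := by
  have hα : IsIntegral F α := .of_finite F α
  rw [trace_eq_finrank_mul_minpoly_nextCoeff, Algebra.norm_eq_norm_adjoin]
  have h1 := Algebra.PowerBasis.norm_gen_eq_coeff_zero_minpoly (adjoin.powerBasis hα)
  rw [adjoin.powerBasis_gen, adjoin.powerBasis_dim, minpoly_gen] at h1
  rw [h1, lam, map_pow, ← nsmul_eq_mul, AddChar.map_nsmul_eq_pow, ← mul_pow]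

open Classical in
lemma card_minpoly {P : F[X]} (hP : P.Monic) (hi : Irreducible P)
    (hd : P.natDegree ∣ Module.finrank F K) :
    (Finset.univ.filter (fun α : K => minpoly F α = P)).card = P.natDegree := by
  have h1 := hi.natDegree_dvd_iff_dvd_X_pow_card_pow_sub_X.1 hd
  have hsp : (P.map (algebraMap F K)).Splits := by
    rw [← Module.natCard_eq_pow_finrank, ← Fintype.card_eq_nat_card] at h1
    have h2 := (FiniteField.isSplittingField_sub K F).splits
    refine h2.of_dvd ?_ (map_dvd (algebraMap F K) h1)
    exact map_ne_zero (FiniteField.X_pow_card_sub_X_ne_zero _ Fintype.one_lt_card)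
  have h2 := card_rootSet_eq_natDegree (K := K) (PerfectField.separable_of_irreducible hi) hsp
  rw [← h2, ← Set.toFinset_card]
  congr 1
  ext α
  simp only [Finset.mem_filter, Finset.mem_univ, true_and, Set.mem_toFinset,
    mem_rootSet_of_ne hi.ne_zero]
  constructor
  · rintro rfl; exact minpoly.aeval _ _
  · intro h; exact (minpoly.eq_of_irreducible_of_monic hi h hP).symm

open IntermediateField in
theorem hasse_davenport (hψ : ψ ≠ 1) :
    ∑ α : K, χ (Algebra.norm F α) * ψ (Algebra.trace F K α) =
      (-1) ^ (Module.finrank F K - 1) * gaussSum χ ψ ^ (Module.finrank F K) := by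
  classical
  set m := Module.finrank F K with hm
  have hmpos : 0 < m := Module.finrank_pos
  have h := cc_eq χ ψ hψ (B := m) (n := m - 1) (by omega)
  rw [Nat.sub_add_cancel hmpos] at h
  rw [← h, cc]
  have hfin : ∀ α : K, (minpoly F α).natDegree * Module.finrank F⟮α⟯ K = m := fun α => by
    rw [← adjoin.finrank (.of_finite F α), Module.finrank_mul_finrank]
  have hmaps : ∀ α ∈ (Finset.univ : Finset K), minpoly F α ∈ I F m := by
    intro α _
    have hα : IsIntegral F α := .of_finite F α
    rw [mem_I]
    exact ⟨⟨minpoly.monic hα, Nat.le_of_dvd hmpos ⟨_, (hfin α).symm⟩⟩, minpoly.irreducible hα⟩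
  rw [← Finset.sum_fiberwise_of_maps_to hmaps]
  refine Finset.sum_congr rfl fun P hP => ?_
  rw [mem_I] at hP
  have hpos := hP.2.natDegree_pos
  by_cases hd : P.natDegree ∣ m
  · obtain ⟨s, hs⟩ := hd
    have hs0 : 0 < s := Nat.pos_of_ne_zero (by rintro rfl; omega)
    have : ∀ α ∈ Finset.univ.filter (fun α : K => minpoly F α = P),
        χ (Algebra.norm F α) * ψ (Algebra.trace F K α) = lam χ ψ P ^ s := by
      intro α hα
      have hα := (Finset.mem_filter.1 hα).2
      rw [lam_minpoly, hα]
      congr 1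
      have := hfin α
      rw [hα, hs] at this
      exact Nat.eq_of_mul_eq_mul_left hpos this
    rw [Finset.sum_congr rfl this, Finset.sum_const, card_minpoly hP.1.1 hP.2 ⟨s, hs⟩,
      Finset.sum_eq_single s]
    · rw [if_pos hs.symm, nsmul_eq_mul]
    · intro r _ hr
      rw [if_neg]
      intro h
      exact hr (Nat.eq_of_mul_eq_mul_left hpos (h.trans hs))
    · intro h
      exfalso; apply h
      rw [Finset.mem_Icc]
      exact ⟨hs0, Nat.le_of_dvd hmpos ⟨_, by rw [mul_comm]; exact hs⟩⟩
  · rw [Finset.sum_eq_zero, Finset.sum_eq_zero]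
    · intro r _; rw [if_neg]; intro h; exact hd ⟨_, h.symm⟩
    · intro α hα
      exfalso
      rw [← (Finset.mem_filter.1 hα).2] at hd
      exact hd ⟨_, (hfin α).symm⟩

end HD

namespace W
set_option linter.unusedSectionVars false
set_option linter.unusedVariables false
variable {E F K : Type} [DecidableEq E] [DecidableEq F] [DecidableEq K] [Field E] [Field F] [Field K] [Fintype E] [Fintype F] [Fintype K]
  [Algebra E F] [Algebra F K] [Algebra E K] [IsScalarTower E F K]

lemma sum_split (G : F → ℂ) : ∑ u : F, G u = G 0 + ∑ u : Fˣ, G u := by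
  rw [← Finset.add_sum_erase _ _ (Finset.mem_univ (0 : F))]
  congr 1
  symm
  refine Finset.sum_bij (fun (u : Fˣ) _ => (u : F)) ?_ ?_ ?_ ?_
  · simp
  · intro a _ b _ h; exact Units.ext h
  · intro b hb; exact ⟨Units.mk0 b (by simpa using hb), Finset.mem_univ _, rfl⟩
  · simp

lemma card_units_cast (F : Type) [DecidableEq F] [Field F] [Fintype F] : ((Fintype.card Fˣ : ℕ) : ℂ) = Fintype.card F - 1 := by
  rw [Fintype.card_units, Nat.cast_sub Fintype.card_pos]; simp

lemma range_units (v : Fˣ) : v ∈ (Units.map (algebraMap E F : E →* F)).range ↔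
    v ^ (Fintype.card E - 1) = 1 := by
  set H := (Units.map (algebraMap E F : E →* F)).range
  have hinj : Function.Injective (Units.map (algebraMap E F : E →* F)) :=
    Units.map_injective (algebraMap E F).injective
  have hcard : (Finset.univ.image (Units.map (algebraMap E F : E →* F))).card = Fintype.card E - 1 := by
    rw [Finset.card_image_of_injective _ hinj, Finset.card_univ, Fintype.card_units]
  have hsub : Finset.univ.image (Units.map (algebraMap E F : E →* F)) ⊆
      Finset.univ.filter (fun v : Fˣ => v ^ (Fintype.card E - 1) = 1) := by
    intro v hv
    obtain ⟨y, -, rfl⟩ := Finset.mem_image.1 hv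
    simp only [Finset.mem_filter, Finset.mem_univ, true_and]
    rw [← map_pow, ← Fintype.card_units, pow_card_eq_one, map_one]
  have heq := Finset.eq_of_subset_of_card_le hsub (by
    rw [hcard]
    exact IsCyclic.card_pow_eq_one_le (Nat.sub_pos_of_lt Fintype.one_lt_card))
  have := Finset.ext_iff.1 heq v
  simpa [H, MonoidHom.mem_range] using this

lemma ker_phi {N : ℕ} (hN : N * (Fintype.card E - 1) = Fintype.card F - 1)
    (φ : MulChar F ℂ) (hφ : orderOf φ = N) (v : Fˣ) :
    φ v = 1 ↔ v ∈ (Units.map (algebraMap E F : E →* F)).range := by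
  rw [range_units]
  obtain ⟨g, hg⟩ := IsCyclic.exists_generator (α := Fˣ)
  have hgo : orderOf g = Fintype.card F - 1 := by
    rw [orderOf_eq_card_of_forall_mem_zpowers hg, Nat.card_eq_fintype_card, Fintype.card_units]
  obtain ⟨i, rfl⟩ : ∃ i : ℕ, g ^ i = v := by
    have := hg v
    rw [← mem_powers_iff_mem_zpowers] at this
    exact this
  rw [← pow_mul, ← orderOf_dvd_iff_pow_eq_one, hgo, ← hN,
    Nat.mul_dvd_mul_iff_right (Nat.sub_pos_of_lt Fintype.one_lt_card), ← hφ,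
    orderOf_dvd_iff_pow_eq_one, MulChar.eq_iff hg, MulChar.pow_apply_coe, MulChar.one_apply_coe,
    Units.val_pow_eq_pow_val, map_pow]

lemma orth {N : ℕ} (hN : N * (Fintype.card E - 1) = Fintype.card F - 1)
    (φ : MulChar F ℂ) (hφ : orderOf φ = N) (G : Fˣ → ℂ) :
    ∑ j ∈ Finset.range N, ∑ v : Fˣ, (φ ^ j) ((v⁻¹ : Fˣ) : F) * G v =
      N * ∑ y : Eˣ, G (Units.map (algebraMap E F : E →* F) y) := by
  rw [Finset.sum_comm]
  have h1 : ∀ v : Fˣ, ∑ j ∈ Finset.range N, (φ ^ j) ((v⁻¹ : Fˣ) : F) * G v =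
      if φ v = 1 then N * G v else 0 := by
    intro v
    have hv : φ ((v⁻¹ : Fˣ) : F) * φ v = 1 := by rw [← map_mul]; simp
    have hp : φ ((v⁻¹ : Fˣ) : F) ^ N = 1 := by
      rw [← MulChar.pow_apply_coe, ← hφ, pow_orderOf_eq_one, MulChar.one_apply_coe]
    rw [← Finset.sum_mul]
    simp only [MulChar.pow_apply_coe]
    split_ifs with h
    · rw [h, mul_one] at hv
      simp only [hv]; simp
    · have hne : φ ((v⁻¹ : Fˣ) : F) ≠ 1 := by
        intro h2; rw [h2, one_mul] at hv; exact h hv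
      rw [geom_sum_eq hne, hp]; simp
  simp only [h1]
  rw [← Finset.sum_filter, ← Finset.mul_sum]
  congr 1
  symm
  refine Finset.sum_bij (fun y _ => Units.map (algebraMap E F : E →* F) y) ?_ ?_ ?_ ?_
  · intro y _
    simp only [Finset.mem_filter, Finset.mem_univ, true_and]
    exact (ker_phi hN φ hφ _).2 ⟨y, rfl⟩
  · intro a _ b _ h; exact Units.map_injective (algebraMap E F).injective h
  · intro v hv
    obtain ⟨y, hy⟩ := (ker_phi hN φ hφ _).1 (Finset.mem_filter.1 hv).2
    exact ⟨y, Finset.mem_univ _, hy⟩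
  · simp

/-- norm as hom on units -/
noncomputable abbrev nu (F K : Type) [Field F] [Field K] [Algebra F K] : Kˣ →* Fˣ :=
  Units.map (Algebra.norm F (S := K))

lemma gauss_term (θ : MulChar F ℂ) (χ : AddChar F ℂ) (Ψ : K → ℂ) (b : K) (hb : b ≠ 0) :
    gaussSum θ⁻¹ χ * (θ⁻¹ (Algebra.norm F b) * ∑ α : K, θ (Algebra.norm F α) * Ψ α) =
      ∑ v : Fˣ, θ ((v⁻¹ : Fˣ) : F) *
        ∑ α : Kˣ, χ (v * Algebra.norm F (α : K)) * Ψ (b * α) := by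
  have hz : θ (Algebra.norm F (0 : K)) = 0 := by
    rw [Algebra.norm_zero, MulChar.map_zero]
  have h1 : θ⁻¹ (Algebra.norm F b) * ∑ α : K, θ (Algebra.norm F α) * Ψ α =
      ∑ α : Kˣ, θ (Algebra.norm F (α : K)) * Ψ (b * α) := by
    rw [sum_split, hz, zero_mul, zero_add,
      ← Equiv.sum_comp (Equiv.mulLeft (Units.mk0 b hb)), Finset.mul_sum]
    refine Finset.sum_congr rfl fun α _ => ?_
    simp only [Equiv.coe_mulLeft, Units.val_mul, Units.val_mk0, map_mul]
    have : θ⁻¹ (Algebra.norm F b) * θ (Algebra.norm F b) = 1 := by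
      rw [← MulChar.mul_apply, MulChar.inv_mul, MulChar.one_apply]
      exact (Algebra.norm_ne_zero_iff.2 hb).isUnit
    linear_combination (θ (Algebra.norm F (α : K)) * Ψ (b * α)) * this
  rw [h1, gaussSum, sum_split, MulChar.map_zero, zero_mul, zero_add, Finset.sum_mul_sum, Finset.sum_comm]
  simp only [Finset.mul_sum]
  conv_rhs => rw [Finset.sum_comm]
  refine Finset.sum_congr rfl fun α _ => ?_
  rw [← Equiv.sum_comp (Equiv.mulRight (nu F K α))]
  refine Finset.sum_congr rfl fun v _ => ?_
  have h2 : θ⁻¹ ((v * nu F K α : Fˣ) : F) * θ (Algebra.norm F (α : K)) = θ ((v⁻¹ : Fˣ) : F) := by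
    rw [MulChar.inv_apply', ← map_mul]
    congr 1
    have : Algebra.norm F (α : K) ≠ 0 := Algebra.norm_ne_zero_iff.2 α.ne_zero
    simp
    field_simp
  simp only [Equiv.coe_mulRight]
  rw [← h2]
  simp only [Units.val_mul, Units.coe_map, MonoidHom.coe_coe]
  ring

lemma fibre_sum (G : F → ℂ) : ((Fintype.card F : ℂ) - 1) * ∑ d : Kˣ, G (Algebra.norm F (d : K)) =
    ((Fintype.card K : ℂ) - 1) * ∑ u : Fˣ, G u := by
  rw [← card_units_cast, ← card_units_cast]
  have h : ∀ u : Fˣ, ∑ d : Kˣ, G (Algebra.norm F (d : K)) =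
      ∑ d : Kˣ, G (u * Algebra.norm F (d : K)) := by
    intro u
    obtain ⟨v, hv⟩ := FiniteField.unitsMap_norm_surjective F K u
    rw [← Equiv.sum_comp (Equiv.mulLeft v)]
    refine Finset.sum_congr rfl fun d _ => ?_
    rw [← hv]
    simp
  calc (Fintype.card Fˣ : ℂ) * ∑ d : Kˣ, G (Algebra.norm F (d : K))
      = ∑ u : Fˣ, ∑ d : Kˣ, G (Algebra.norm F (d : K)) := by simp
    _ = ∑ d : Kˣ, ∑ u : Fˣ, G (u * Algebra.norm F (d : K)) := by
        rw [Finset.sum_congr rfl fun u _ => h u, Finset.sum_comm]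
    _ = ∑ d : Kˣ, ∑ u : Fˣ, G u := by
        refine Finset.sum_congr rfl fun d _ => ?_
        exact Equiv.sum_comp (Equiv.mulRight (nu F K d)) (fun u : Fˣ => G u)
    _ = _ := by simp

lemma trace_fibre (c : E) : (Fintype.card E : ℂ) * ∑ u : F, (if Algebra.trace E F u = c then (1 : ℂ) else 0) =
    Fintype.card F := by
  have h : ∀ c' : E, ∑ u : F, (if Algebra.trace E F u = c then (1 : ℂ) else 0) =
      ∑ u : F, (if Algebra.trace E F u = c' then (1 : ℂ) else 0) := by
    intro c'
    obtain ⟨u₀, hu⟩ := Algebra.trace_surjective E F (c - c')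
    rw [← Equiv.sum_comp (Equiv.addRight u₀)]
    refine Finset.sum_congr rfl fun u _ => ?_
    simp only [Equiv.coe_addRight, map_add, hu]
    congr 1
    simp only [eq_iff_iff]
    constructor <;> intro h <;> linear_combination h
  calc _ = ∑ c' : E, ∑ u : F, (if Algebra.trace E F u = c' then (1 : ℂ) else 0) := by
        rw [← Finset.sum_congr rfl fun c' _ => h c']; simp
    _ = _ := by rw [Finset.sum_comm]; simp

lemma card_D (a : E) (ha : a ≠ 0) : (Fintype.card E : ℂ) * ((Fintype.card F : ℂ) - 1) *
    ∑ d : K, (if Algebra.trace E F (Algebra.norm F d) = -a then (1 : ℂ) else 0) =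
    Fintype.card F * ((Fintype.card K : ℂ) - 1) := by
  have hna : ¬ (0 : E) = -a := by intro h; exact ha (by simpa using h.symm)
  have h1 := trace_fibre (F := F) (-a)
  rw [sum_split, map_zero, if_neg hna, zero_add] at h1
  have h2 := fibre_sum (K := K) (fun u : F => if Algebra.trace E F u = -a then (1 : ℂ) else 0)
  rw [sum_split, Algebra.norm_zero, map_zero, if_neg hna, zero_add]
  linear_combination (Fintype.card E : ℂ) * h2 + ((Fintype.card K : ℂ) - 1) * h1

lemma trace_char_ne_one (ψ : AddChar E ℂ) (hψ : ψ ≠ 1) :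
    ψ.compAddMonoidHom (Algebra.trace E K).toAddMonoidHom ≠ 1 := by
  intro h
  apply hψ
  ext x
  obtain ⟨d, rfl⟩ := Algebra.trace_surjective E K x
  exact DFunLike.congr_fun h d

lemma shift_sum (a : E) (ha : a ≠ 0) (b : K) (hb : b ≠ 0) (ψ : AddChar E ℂ)
    (hψ : ψ ≠ 1) (hcop : (Nat.card Eˣ).Coprime (Module.finrank F K)) :
    ∑ d : K, (if Algebra.trace E F (Algebra.norm F d) = -a then
        ∑ y : Eˣ, ψ (y * Algebra.trace E K (b * d)) else 0) =
    - ∑ d : K, (if Algebra.trace E F (Algebra.norm F d) = 0 then ψ (Algebra.trace E K (b * d)) else 0) := by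
  have h0 : ∑ d : K, ψ (Algebra.trace E K (b * d)) = 0 := by
    have h1 : ∑ d : K, ψ (Algebra.trace E K (b * d)) = ∑ d : K, ψ (Algebra.trace E K d) := by
      exact Equiv.sum_comp (Equiv.mulLeft₀ b hb) (fun d => ψ (Algebra.trace E K d))
    rw [h1]
    have := AddChar.sum_eq_zero_of_ne_one (trace_char_ne_one (K := K) ψ hψ)
    simpa using this
  have hsc : ∀ (y : Eˣ) (d : K), Algebra.trace E F (Algebra.norm F (algebraMap E K y * d)) =
      (y : E) ^ (Module.finrank F K) * Algebra.trace E F (Algebra.norm F d) := by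
    intro y d
    rw [IsScalarTower.algebraMap_apply E F K, map_mul, Algebra.norm_algebraMap, ← map_pow,
      ← Algebra.smul_def, map_smul, smul_eq_mul]
  have h2 : ∀ y : Eˣ, ∑ d : K, (if Algebra.trace E F (Algebra.norm F d) = -a then
        ψ (y * Algebra.trace E K (b * d)) else 0) =
      ∑ d : K, (if ((y⁻¹ : Eˣ) : E) ^ (Module.finrank F K) * Algebra.trace E F (Algebra.norm F d) = -a then
        ψ (Algebra.trace E K (b * d)) else 0) := by
    intro y
    have hy : algebraMap E K ((y⁻¹ : Eˣ) : E) ≠ 0 := by simp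
    rw [← Equiv.sum_comp (Equiv.mulLeft₀ _ hy)]
    refine Finset.sum_congr rfl fun d _ => ?_
    simp only [Equiv.mulLeft₀_apply, hsc]
    congr 2
    rw [mul_left_comm, ← Algebra.smul_def, map_smul, smul_eq_mul, ← mul_assoc, Units.mul_inv, one_mul]
  have h3 : ∀ t : E, ∑ y : Eˣ, (if ((y⁻¹ : Eˣ) : E) ^ (Module.finrank F K) * t = -a then (1 : ℂ) else 0) =
      if t = 0 then 0 else 1 := by
    intro t
    rw [← Equiv.sum_comp (Equiv.inv Eˣ)]
    simp only [Equiv.inv_apply, inv_inv]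
    have h4 := Equiv.sum_comp (powCoprime hcop) (fun y : Eˣ => if (y : E) * t = -a then (1 : ℂ) else 0)
    simp only [powCoprime_apply, Units.val_pow_eq_pow_val] at h4
    rw [h4]
    split_ifs with ht
    · subst ht
      simp [ha]
    · rw [Finset.sum_eq_single (Units.mk0 (-a / t) (div_ne_zero (neg_ne_zero.2 ha) ht))]
      · rw [if_pos]; simp; field_simp
      · intro y _ hy
        rw [if_neg]
        intro h
        apply hy
        ext
        rw [Units.val_mk0, ← h]; field_simp
      · simp
  calc _ = ∑ y : Eˣ, ∑ d : K, (if Algebra.trace E F (Algebra.norm F d) = -a then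
        ψ (y * Algebra.trace E K (b * d)) else 0) := by
        rw [Finset.sum_comm]
        refine Finset.sum_congr rfl fun d _ => ?_
        split_ifs <;> simp
    _ = ∑ d : K, ψ (Algebra.trace E K (b * d)) *
          ∑ y : Eˣ, (if ((y⁻¹ : Eˣ) : E) ^ (Module.finrank F K) * Algebra.trace E F (Algebra.norm F d) = -a then (1 : ℂ) else 0) := by
        rw [Finset.sum_congr rfl fun y _ => h2 y, Finset.sum_comm]
        refine Finset.sum_congr rfl fun d _ => ?_
        rw [Finset.mul_sum]
        refine Finset.sum_congr rfl fun y _ => ?_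
        split_ifs <;> simp
    _ = _ := by
        rw [← sub_eq_zero, sub_neg_eq_add, ← Finset.sum_add_distrib]
        refine Eq.trans ?_ h0
        refine Finset.sum_congr rfl fun d _ => ?_
        rw [h3]
        split_ifs <;> simp

lemma sum_shift_zero (b : K) (hb : b ≠ 0) (ψ : AddChar E ℂ) (hψ : ψ ≠ 1) :
    ∑ d : K, ψ (Algebra.trace E K (b * d)) = 0 := by
  have h1 : ∑ d : K, ψ (Algebra.trace E K (b * d)) = ∑ d : K, ψ (Algebra.trace E K d) := by
    exact Equiv.sum_comp (Equiv.mulLeft₀ b hb) (fun d => ψ (Algebra.trace E K d))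
  rw [h1]
  have := AddChar.sum_eq_zero_of_ne_one (trace_char_ne_one (K := K) ψ hψ)
  simpa using this

lemma sum_mul_char (ψ : AddChar E ℂ) (hψ : ψ ≠ 1) (c : E) :
    ∑ y : E, ψ (y * c) = if c = 0 then (Fintype.card E : ℂ) else 0 := by
  have := AddChar.sum_mulShift c (AddChar.IsPrimitive.of_ne_one hψ)
  rw [this]; split_ifs <;> simp

lemma T_eq (b : K) (hb : b ≠ 0) (ψ : AddChar E ℂ) (hψ : ψ ≠ 1) :
    (Fintype.card E : ℂ) *
      ∑ d : K, (if Algebra.trace E F (Algebra.norm F d) = 0 then ψ (Algebra.trace E K (b * d)) else 0) =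
    (Fintype.card E - 1) + ∑ y : Eˣ, ∑ d : Kˣ,
      ψ (Algebra.trace E F (algebraMap E F y * Algebra.norm F (d : K))) * ψ (Algebra.trace E K (b * d)) := by
  have h1 : (Fintype.card E : ℂ) *
      ∑ d : K, (if Algebra.trace E F (Algebra.norm F d) = 0 then ψ (Algebra.trace E K (b * d)) else 0) =
      ∑ y : E, ∑ d : K, ψ (y * Algebra.trace E F (Algebra.norm F d)) * ψ (Algebra.trace E K (b * d)) := by
    rw [Finset.sum_comm, Finset.mul_sum]
    refine Finset.sum_congr rfl fun d _ => ?_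
    rw [← Finset.sum_mul, sum_mul_char ψ hψ]
    split_ifs <;> simp
  have h2 : ∀ y : E, ∑ d : K, ψ (y * Algebra.trace E F (Algebra.norm F d)) * ψ (Algebra.trace E K (b * d))
      = 1 + ∑ d : Kˣ, ψ (Algebra.trace E F (algebraMap E F y * Algebra.norm F (d : K))) * ψ (Algebra.trace E K (b * d)) := by
    intro y
    rw [sum_split]
    congr 1
    · simp
    · refine Finset.sum_congr rfl fun d _ => ?_
      rw [← Algebra.smul_def, map_smul, smul_eq_mul]
  rw [h1, sum_split]
  have h3 : ∑ d : K, ψ ((0 : E) * Algebra.trace E F (Algebra.norm F d)) * ψ (Algebra.trace E K (b * d)) = 0 := by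
    simpa using sum_shift_zero b hb ψ hψ
  rw [h3, zero_add, Finset.sum_congr rfl fun (y : Eˣ) _ => h2 y, Finset.sum_add_distrib]
  congr 1
  rw [← card_units_cast]; simp

lemma gauss_mul (θ : MulChar F ℂ) (hθ : θ ≠ 1) (χ : AddChar F ℂ) (hχ : χ ≠ 1) :
    gaussSum θ⁻¹ χ * gaussSum θ χ = θ (-1) * Fintype.card F := by
  have h1 := gaussSum_mul_gaussSum_eq_card hθ (AddChar.IsPrimitive.of_ne_one hχ)
  have h2 := mul_gaussSum_inv_eq_gaussSum θ⁻¹ χ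
  have h3 : θ⁻¹ (-1) = θ (-1) := by
    rw [MulChar.inv_apply']; simp
  rw [← h2, ← h1, h3]
  ring

lemma V_eq {N : ℕ} (hN : N * (Fintype.card E - 1) = Fintype.card F - 1)
    (φ : MulChar F ℂ) (hφ : orderOf φ = N) (b : K) (hb : b ≠ 0) (ψ : AddChar E ℂ) (hψ : ψ ≠ 1)
    (χ : AddChar F ℂ) (hχ : ∀ x, χ x = ψ (Algebra.trace E F x)) (m : ℕ) (hm : Module.finrank F K = m)
    (hm0 : 0 < m) (hN0 : 0 < N) :
    (N : ℂ) * ∑ y : Eˣ, ∑ d : Kˣ,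
      ψ (Algebra.trace E F (algebraMap E F y * Algebra.norm F (d : K))) * ψ (Algebra.trace E K (b * d)) =
    1 + Fintype.card F * (-1) ^ (m - 1) * ∑ j ∈ Finset.Icc 1 (N - 1),
      (φ ^ j) (-1) * gaussSum (φ ^ j) χ ^ (m - 1) *
              (starRingEnd ℂ) ((φ ^ j) (Algebra.norm F b)) := by
  have hχ1 : χ ≠ 1 := by
    intro h
    apply trace_char_ne_one (K := F) ψ hψ
    ext x
    have := hχ x
    rw [h] at this
    simpa using this.symm
  have hnb : Algebra.norm F b ≠ 0 := Algebra.norm_ne_zero_iff.2 hb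
  have hHD : ∀ θ : MulChar F ℂ, ∑ α : K, θ (Algebra.norm F α) * ψ (Algebra.trace E K α) =
      (-1) ^ (m - 1) * gaussSum θ χ ^ m := by
    intro θ
    rw [← hm, ← HD.hasse_davenport θ χ hχ1]
    refine Finset.sum_congr rfl fun α _ => ?_
    rw [hχ, Algebra.trace_trace]
  have h1 := orth (E := E) hN φ hφ (fun v => ∑ d : Kˣ, χ (v * Algebra.norm F (d : K)) * ψ (Algebra.trace E K (b * d)))
  have h2 : ∀ j, ∑ v : Fˣ, (φ ^ j) ((v⁻¹ : Fˣ) : F) * ∑ d : Kˣ, χ (v * Algebra.norm F (d : K)) * ψ (Algebra.trace E K (b * d))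
     = gaussSum (φ ^ j)⁻¹ χ * ((φ ^ j)⁻¹ (Algebra.norm F b) * ((-1) ^ (m - 1) * gaussSum (φ ^ j) χ ^ m)) := by
    intro j
    rw [← hHD]
    exact (gauss_term (φ ^ j) χ (fun α => ψ (Algebra.trace E K α)) b hb).symm
  rw [Finset.sum_congr rfl fun j _ => h2 j] at h1
  simp only [hχ, Units.coe_map] at h1
  refine Eq.trans h1.symm ?_
  obtain ⟨M, rfl⟩ : ∃ M, N = M + 1 := ⟨N - 1, by omega⟩
  obtain ⟨n, rfl⟩ : ∃ n, m = n + 1 := ⟨m - 1, by omega⟩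
  rw [Finset.sum_range_succ', add_comm]
  congr 1
  · have hg : gaussSum (1 : MulChar F ℂ) χ = -1 := by
      exact gaussSum_one_left hχ1
    rw [pow_zero, inv_one, hg, MulChar.one_apply hnb.isUnit]
    simp only [Nat.add_sub_cancel]
    rw [one_mul, pow_succ]
    have : ((-1 : ℂ) ^ n) * (-1) ^ n = 1 := by rw [← mul_pow]; simp
    linear_combination this
  · simp only [Nat.add_sub_cancel]
    rw [Finset.mul_sum]
    rw [Finset.range_eq_Ico, Finset.sum_Ico_add' (fun j => gaussSum (φ ^ j)⁻¹ χ * ((φ ^ j)⁻¹ (Algebra.norm F b) * ((-1) ^ n * gaussSum (φ ^ j) χ ^ (n+1)))) 0 M 1, zero_add]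
    have hI : Finset.Ico 1 (M + 1) = Finset.Icc 1 M := by ext; simp
    rw [hI]
    refine Finset.sum_congr rfl fun j hj => ?_
    rw [Finset.mem_Icc] at hj
    have hne : φ ^ j ≠ 1 := by
      intro h
      have := Nat.le_of_dvd hj.1 (orderOf_dvd_of_pow_eq_one h)
      omega
    have h4 := gauss_mul (φ ^ j) hne χ hχ1
    have h5 : (starRingEnd ℂ) ((φ ^ j) (Algebra.norm F b)) = (φ ^ j)⁻¹ (Algebra.norm F b) :=
      MulChar.star_apply' _ _
    rw [h5, pow_succ]
    linear_combination ((φ ^ j)⁻¹ (Algebra.norm F b) * (-1) ^ n * gaussSum (φ ^ j) χ ^ n) * h4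

lemma w_eq (a : E) (ha : a ≠ 0) (b : K) (hb : b ≠ 0) (ψ : AddChar E ℂ)
    (hψ : ψ ≠ 1) (hcop : (Nat.card Eˣ).Coprime (Module.finrank F K)) :
    (Fintype.card E : ℂ) * (Nat.card {d : K // Algebra.trace E F (Algebra.norm F d) + a = 0 ∧
        Algebra.trace E K (b * d) ≠ 0} : ℂ) =
    (Fintype.card E - 1) * ∑ d : K, (if Algebra.trace E F (Algebra.norm F d) = -a then (1 : ℂ) else 0)
     + ∑ d : K, (if Algebra.trace E F (Algebra.norm F d) = 0 then ψ (Algebra.trace E K (b * d)) else 0) := by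
  have h1 := shift_sum (F := F) a ha b hb ψ hψ hcop
  rw [← neg_eq_iff_eq_neg] at h1
  rw [← h1, Nat.card_eq_fintype_card, Fintype.card_subtype, Finset.card_filter, Nat.cast_sum,
    Finset.mul_sum, Finset.mul_sum, ← Finset.sum_neg_distrib, ← Finset.sum_add_distrib]
  refine Finset.sum_congr rfl fun d _ => ?_
  have h2 := sum_mul_char ψ hψ (Algebra.trace E K (b * d))
  rw [sum_split, zero_mul, AddChar.map_zero_eq_one] at h2
  simp only [← eq_neg_iff_add_eq_zero (b := a)]
  by_cases h3 : Algebra.trace E F (Algebra.norm F d) = -a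
  · by_cases h4 : Algebra.trace E K (b * d) = 0
    · rw [if_pos h4] at h2
      rw [if_neg (by tauto), if_pos h3, if_pos h3]
      push_cast
      linear_combination h2
    · rw [if_neg h4] at h2
      rw [if_pos ⟨h3, h4⟩, if_pos h3, if_pos h3]
      push_cast
      linear_combination h2
  · rw [if_neg (by tauto), if_neg h3, if_neg h3]
    simp

lemma final_alg (q f k N : ℕ) (hq : 2 ≤ q) (hf : 2 ≤ f) (hk : 1 ≤ k) (w D T V S s : ℂ)
    (hN : (N : ℂ) * (q - 1) = q ^ f - 1)
    (h1 : (q : ℂ) * w = (q - 1) * D + T) (h2 : (q : ℂ) * T = (q - 1) + V)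
    (h3 : N * V = 1 + (q : ℂ) ^ f * s * S)
    (h4 : (q : ℂ) * (q ^ f - 1) * D = q ^ f * (q ^ k - 1)) :
    w = ((q : ℂ) - 1) * (q : ℂ) ^ (f + k - 2) / ((q : ℂ) ^ f - 1) +
        s * ((q : ℂ) - 1) * (q : ℂ) ^ (f - 2) / ((q : ℂ) ^ f - 1) * S := by
  have hq0 : (q : ℂ) ≠ 0 := by exact_mod_cast (by omega : q ≠ 0)
  have hqf : (q : ℂ) ^ f - 1 ≠ 0 := by
    rw [sub_ne_zero]
    exact_mod_cast (Nat.one_lt_pow (by omega) (by omega) : 1 < q ^ f).ne'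
  obtain ⟨g, rfl⟩ : ∃ g, f = g + 2 := ⟨f - 2, by omega⟩
  have e1 : g + 2 + k - 2 = g + k := by omega
  rw [e1, Nat.add_sub_cancel]
  have key : (q : ℂ) ^ 2 * ((q : ℂ) ^ (g + 2) - 1) * w = (q : ℂ) ^ 2 * (((q : ℂ) - 1) * (q : ℂ) ^ (g + k) +
        s * ((q : ℂ) - 1) * (q : ℂ) ^ g * S) := by
    have h5 : ((q : ℂ) ^ (g + 2) - 1) * V = (q - 1) * (1 + (q : ℂ) ^ (g + 2) * s * S) := by
      rw [← hN, ← h3]; ring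
    simp only [pow_add] at *
    linear_combination (q : ℂ) * ((q : ℂ) ^ g * q ^ 2 - 1) * h1 + (q - 1) * h4 +
      ((q : ℂ) ^ g * q ^ 2 - 1) * h2 + h5
  field_simp
  have hq2 : (q : ℂ) ^ 2 ≠ 0 := pow_ne_zero _ hq0
  apply mul_left_cancel₀ hq2
  linear_combination key

end W

open scoped BigOperators

/-- **Theorem 2, weight formula for `f > 1`.** Let `q` be a power of a
prime `p`, `f ∣ k`, `f > 1`, `gcd(k/f, q-1) = 1`, `a ∈ F_qˣ`, and
`D = {x ∈ F_{q^k} : Tr_{q^f/q}(x^{(q^k-1)/(q^f-1)}) + a = 0}`.  Let `χ₁` be the canonical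
additive character of `F_{q^f}` and `φ` a multiplicative character of `F_{q^f}ˣ` of order
`(q^f-1)/(q-1)`.  Then for every `b ∈ F_{q^k}ˣ`, in `ℂ`,
`w(c_b) = (q-1)q^{f+k-2}/(q^f-1) + ((-1)^{k/f-1}(q-1)q^{f-2}/(q^f-1)) ·
  ∑_{j=1}^{(q^f-1)/(q-1)-1} φ^j(-1) G(φ^j,χ₁)^{k/f-1} conj(φ^j)(b^{(q^k-1)/(q^f-1)})`.
Here `x^{(q^k-1)/(q^f-1)}` is the norm from `Fk` to `Ff` (hypothesis `hnorm`). -/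
theorem stmt14 (p e q f k : ℕ) [Fact p.Prime] (he : 0 < e) (hq : q = p ^ e)
    (hf : 1 < f) (hfk : f ∣ k) (hgcd : Nat.gcd (k / f) (q - 1) = 1)
    (Fq Ff Fk : Type) [Field Fq] [Field Ff] [Field Fk]
    [Fintype Fq] [Fintype Ff] [Fintype Fk]
    [Algebra Fq Ff] [Algebra Ff Fk] [Algebra Fq Fk] [IsScalarTower Fq Ff Fk]
    [Algebra (ZMod p) Ff]
    (hcq : Fintype.card Fq = q) (hcf : Fintype.card Ff = q ^ f)
    (hck : Fintype.card Fk = q ^ k)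
    (hnorm : ∀ x : Fk,
      algebraMap Ff Fk (Algebra.norm Ff x) = x ^ ((q ^ k - 1) / (q ^ f - 1)))
    (χ₁ : AddChar Ff ℂ)
    (hχ₁ : ∀ x : Ff, χ₁ x =
      Complex.exp (2 * Real.pi * Complex.I * ((Algebra.trace (ZMod p) Ff x).val : ℂ) / p))
    (φ : MulChar Ff ℂ) (hφ : orderOf φ = (q ^ f - 1) / (q - 1))
    (a : Fq) (ha : a ≠ 0) (b : Fk) (hb : b ≠ 0) :
    (Nat.card {d : Fk // Algebra.trace Fq Ff (Algebra.norm Ff d) + a = 0 ∧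
        Algebra.trace Fq Fk (b * d) ≠ 0} : ℂ)
      = ((q : ℂ) - 1) * (q : ℂ) ^ (f + k - 2) / ((q : ℂ) ^ f - 1) +
        (-1 : ℂ) ^ (k / f - 1) * ((q : ℂ) - 1) * (q : ℂ) ^ (f - 2) / ((q : ℂ) ^ f - 1) *
          ∑ j ∈ Finset.Icc 1 ((q ^ f - 1) / (q - 1) - 1),
            (φ ^ j) (-1) * gaussSum (φ ^ j) χ₁ ^ (k / f - 1) *
              (starRingEnd ℂ) ((φ ^ j) (Algebra.norm Ff b)) := by
  classical
  have hp : p.Prime := Fact.out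
  have hq2 : 2 ≤ q := by
    rw [hq]; exact le_trans hp.two_le (Nat.le_self_pow he.ne' p)
  have hk0 : 0 < k := by
    rcases Nat.eq_zero_or_pos k with h | h
    · have := Fintype.one_lt_card (α := Fk)
      rw [hck, h] at this
      simp at this
    · exact h
  obtain ⟨m, rfl⟩ := hfk
  have hm0 : 0 < m := Nat.pos_of_mul_pos_left hk0
  have hkf : f * m / f = m := Nat.mul_div_cancel_left m (by omega)
  rw [hkf] at hgcd ⊢
  have hfr : Module.finrank Ff Fk = m := by
    have h := Module.card_eq_pow_finrank (K := Ff) (V := Fk)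
    rw [hck, hcf, pow_mul] at h
    exact (Nat.pow_right_injective (Nat.one_lt_pow (by omega) (by omega) : 1 < q ^ f) h).symm
  have hcop : (Nat.card Fqˣ).Coprime (Module.finrank Ff Fk) := by
    rw [hfr, Nat.card_eq_fintype_card, Fintype.card_units, hcq, Nat.coprime_comm]
    exact hgcd
  have hNN : (q ^ f - 1) / (q - 1) * (q - 1) = q ^ f - 1 := by
    apply Nat.div_mul_cancel
    simpa using Nat.sub_dvd_pow_sub_pow q 1 f
  set N := (q ^ f - 1) / (q - 1) with hNdef
  have hqf1 : 1 < q ^ f := Nat.one_lt_pow (by omega) (by omega)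
  have hN0 : 0 < N := by
    rcases Nat.eq_zero_or_pos N with h | h
    · rw [h] at hNN; omega
    · exact h
  have hNc : (N : ℂ) * (q - 1) = q ^ f - 1 := by
    have h := congrArg (Nat.cast (R := ℂ)) hNN
    rw [Nat.cast_mul, Nat.cast_sub (by omega), Nat.cast_sub (by omega)] at h
    simpa using h
  have hN : N * (Fintype.card Fq - 1) = Fintype.card Ff - 1 := by rw [hcq, hcf, hNN]
  haveI : CharP Fq p := by
    obtain ⟨r, hr⟩ := CharP.exists Fq
    obtain ⟨n, hrp, hn⟩ := FiniteField.card Fq r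
    have hd : r ∣ p ^ e := by rw [← hq, ← hcq, hn]; exact dvd_pow_self r n.ne_zero
    have : r = p := (Nat.prime_dvd_prime_iff_eq hrp hp).1 (hrp.dvd_of_dvd_pow hd)
    exact this ▸ hr
  letI : Algebra (ZMod p) Fq := ZMod.algebra Fq p
  haveI : IsScalarTower (ZMod p) Fq Ff := IsScalarTower.of_algebraMap_eq' (Subsingleton.elim _ _)
  have hstd : (ZMod.stdAddChar (N := p)) ≠ 1 := by
    intro h
    have h1 : ZMod.stdAddChar (N := p) 1 = ZMod.stdAddChar (N := p) 0 := by rw [h]; simp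
    exact one_ne_zero (ZMod.injective_stdAddChar h1)
  obtain ⟨ψ, hψdef⟩ : ∃ ψ : AddChar Fq ℂ, ψ = (ZMod.stdAddChar (N := p)).compAddMonoidHom
    (Algebra.trace (ZMod p) Fq).toAddMonoidHom := ⟨_, rfl⟩
  have hψ : ψ ≠ 1 := by
    rw [hψdef]; exact W.trace_char_ne_one (K := Fq) _ hstd
  have hχ : ∀ x, χ₁ x = ψ (Algebra.trace Fq Ff x) := by
    intro x
    have : ψ (Algebra.trace Fq Ff x) = ZMod.stdAddChar (N := p) (Algebra.trace (ZMod p) Ff x) := by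
      rw [hψdef, ← Algebra.trace_trace (R := ZMod p) (S := Fq) x]; rfl
    rw [this, hχ₁, ZMod.stdAddChar_apply, ZMod.toCircle_apply]
  have hw := W.w_eq (F := Ff) a ha b hb ψ hψ hcop
  have hT := W.T_eq (F := Ff) b hb ψ hψ
  have hV := W.V_eq hN φ hφ b hb ψ hψ χ₁ hχ m hfr hm0 hN0
  have hD := W.card_D (F := Ff) (K := Fk) a ha
  rw [hcq] at hw hT hD
  rw [hcf] at hV hD
  rw [hck] at hD
  push_cast at hV hD
  exact W.final_alg q f (f * m) N hq2 hf hk0 _ _ _ _ _ _ hNc hw hT hV hD
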